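/- Let r ≥ 1, ν > 2, Z ∈ ℝ, and U ∈ ℝ^r be fixed. For τ ∈ ℝ^r define ρ(τ) = (tanh(√(τᵀτ))/√(τᵀτ)) τ (with ρ(0)=0), ω(τ) = √(1 − ρ(τ)ᵀρ(τ)), e(τ) = (Z − ρ(τ)ᵀU)/ω(τ), and the quasi log-likelihood ℓ*(τ) = −log ω(τ) − ((ν+1)/2) log( 1 + e(τ)²/(ν−2) ). Then for τ ≠ 0, ℓ* is differentiable at τ and its gradient equals ∇ℓ*(τ) = J(τ) [ (W e/ω) U + ((1 − W e²)/ω²) ρ ], where ρ = ρ(τ), ω = ω(τ), e = e(τ), W = (ν+1)/(ν−2+e²), and J(τ) = √(ρᵀρ/τᵀτ)(I_r − P_τ) + (1−ρᵀρ) P_τ with P_τ = τ(τᵀτ)⁻¹τᵀ. -/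

import Mathlib

open Matrix

/-- The inverse map `ρ(τ) = (tanh(√(τᵀτ))/√(τᵀτ)) · τ` of the variation-free
parametrization of factor loadings. -/
noncomputable def rhoOfTau {r : ℕ} (τ : Fin r → ℝ) : Fin r → ℝ :=
  if τ = 0 then 0 else
    (Real.tanh (Real.sqrt (τ ⬝ᵥ τ)) / Real.sqrt (τ ⬝ᵥ τ)) • τ

/-- The idiosyncratic scale `ω(τ) = √(1 − ρ(τ)ᵀρ(τ))`. -/
noncomputable def omegaOfTau {r : ℕ} (τ : Fin r → ℝ) : ℝ :=
  Real.sqrt (1 - rhoOfTau τ ⬝ᵥ rhoOfTau τ)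

/-- The standardized residual `e(τ) = (Z − ρ(τ)ᵀU)/ω(τ)`. -/
noncomputable def residOfTau {r : ℕ} (Z : ℝ) (U : Fin r → ℝ) (τ : Fin r → ℝ) : ℝ :=
  (Z - rhoOfTau τ ⬝ᵥ U) / omegaOfTau τ

/-- The quasi log-likelihood (up to an additive constant) of the standardized
Student-`t` with `ν` degrees of freedom, mean `ρ(τ)ᵀU` and scale `ω(τ)`. -/
noncomputable def quasiLogLik {r : ℕ} (ν Z : ℝ) (U : Fin r → ℝ)
    (τ : Fin r → ℝ) : ℝ :=
  -Real.log (omegaOfTau τ) -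
    ((ν + 1) / 2) * Real.log (1 + (residOfTau Z U τ) ^ 2 / (ν - 2))

/-!
`ℓ*` is the composition of `ρ` with the Student-`t` log-density at mean `ρᵀU` and scale
`√(1 - ρᵀρ)`, so its gradient is `J(τ)ᵀ` applied to the gradient of the latter in `ρ`. The map `ρ`
is radial: it stretches by `tanh s / s` across the ray through `τ` and by the derivative
`1 - tanh² s` along it, where `s = √(τᵀτ)`. As `tanh² s = ρᵀρ`, these are the coefficients of
`I - P` and `P` in `J(τ)`, which is symmetric.
-/

section DotProduct

variable {m n : Type*} [Fintype n]

/-- The continuous linear functional `x ↦ v ⬝ᵥ x`, i.e. the Fréchet derivative of a function with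
gradient `v`; on `n → ℝ` the sup norm rules out Mathlib's `HasGradientAt`. -/
noncomputable def dotProductCLM (v : n → ℝ) : (n → ℝ) →L[ℝ] ℝ :=
  ∑ i, v i • ContinuousLinearMap.proj i

/-- The continuous linear map `x ↦ A *ᵥ x`, i.e. the Fréchet derivative of a map with Jacobian
matrix `A`. -/
noncomputable def mulVecCLM (A : Matrix m n ℝ) : (n → ℝ) →L[ℝ] (m → ℝ) :=
  A.mulVecLin.toContinuousLinearMap

/-- The orthogonal projection onto the line spanned by `x` (the zero matrix if `x = 0`). -/
noncomputable def lineProj (x : n → ℝ) : Matrix n n ℝ :=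
  (x ⬝ᵥ x)⁻¹ • vecMulVec x x

@[simp]
lemma dotProductCLM_apply (v x : n → ℝ) : dotProductCLM v x = v ⬝ᵥ x := by
  simp [dotProductCLM, dotProduct]

@[simp]
lemma mulVecCLM_apply (A : Matrix m n ℝ) (x : n → ℝ) : mulVecCLM A x = A *ᵥ x := rfl

lemma dotProductCLM_comp_mulVecCLM [Fintype m] (v : m → ℝ) (A : Matrix m n ℝ) :
    (dotProductCLM v).comp (mulVecCLM A) = dotProductCLM (Aᵀ *ᵥ v) := by
  ext1 x
  simp [dotProduct_mulVec, mulVec_transpose]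

lemma lineProj_mulVec (x y : n → ℝ) : lineProj x *ᵥ y = ((x ⬝ᵥ y) / (x ⬝ᵥ x)) • x := by
  rw [lineProj, smul_mulVec, vecMulVec_mulVec, op_smul_eq_smul, smul_smul, div_eq_inv_mul]

lemma lineProj_transpose (x : n → ℝ) : (lineProj x)ᵀ = lineProj x := by
  rw [lineProj, transpose_smul, transpose_vecMulVec]

lemma dotProduct_self_pos {x : n → ℝ} (hx : x ≠ 0) : 0 < x ⬝ᵥ x := by
  simpa using dotProduct_self_star_pos_iff.mpr hx

lemma hasFDerivAt_dotProduct_const (u x : n → ℝ) :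
    HasFDerivAt (fun y => y ⬝ᵥ u) (dotProductCLM u) x := by
  simp only [dotProduct_comm _ u, ← dotProductCLM_apply]
  exact (dotProductCLM u).hasFDerivAt

lemma hasFDerivAt_dotProduct_self (x : n → ℝ) :
    HasFDerivAt (fun y : n → ℝ => y ⬝ᵥ y) (dotProductCLM ((2 : ℝ) • x)) x := by
  refine (HasFDerivAt.fun_sum fun i _ =>
    (hasFDerivAt_apply i x).mul (hasFDerivAt_apply i x)).congr_fderiv ?_
  simp [dotProductCLM, two_mul, add_smul]

lemma hasFDerivAt_sqrt_dotProduct_self {x : n → ℝ} (hx : x ≠ 0) :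
    HasFDerivAt (fun y : n → ℝ => √(y ⬝ᵥ y)) (dotProductCLM ((√(x ⬝ᵥ x))⁻¹ • x)) x := by
  refine ((hasFDerivAt_dotProduct_self x).sqrt (dotProduct_self_pos hx).ne').congr_fderiv ?_
  ext1 y
  simp only [_root_.smul_apply, dotProductCLM_apply, smul_dotProduct, smul_eq_mul]
  ring

lemma hasFDerivAt_sqrt_one_sub_dotProduct_self {x : n → ℝ} (hx : x ⬝ᵥ x < 1) :
    HasFDerivAt (fun y : n → ℝ => √(1 - y ⬝ᵥ y))
      (dotProductCLM (-(√(1 - x ⬝ᵥ x))⁻¹ • x)) x := by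
  refine (((hasFDerivAt_dotProduct_self x).const_sub 1).sqrt (sub_pos.mpr hx).ne').congr_fderiv ?_
  ext1 y
  simp only [_root_.smul_apply, _root_.neg_apply, dotProductCLM_apply, smul_dotProduct,
    smul_eq_mul]
  ring

lemma hasFDerivAt_radial [DecidableEq n] {φ : ℝ → ℝ} {φ' : ℝ} {x : n → ℝ} (hx : x ≠ 0)
    (hφ : HasDerivAt φ φ' √(x ⬝ᵥ x)) :
    HasFDerivAt (fun y : n → ℝ => (φ √(y ⬝ᵥ y) / √(y ⬝ᵥ y)) • y)
      (mulVecCLM ((φ √(x ⬝ᵥ x) / √(x ⬝ᵥ x)) • (1 - lineProj x) + φ' • lineProj x)) x := by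
  have hs : √(x ⬝ᵥ x) ≠ 0 := (Real.sqrt_pos.mpr (dotProduct_self_pos hx)).ne'
  have hquot : HasDerivAt (fun s => φ s / s)
      ((φ' * √(x ⬝ᵥ x) - φ √(x ⬝ᵥ x)) / √(x ⬝ᵥ x) ^ 2) √(x ⬝ᵥ x) := by
    simpa only [mul_one] using hφ.fun_div (hasDerivAt_id' _) hs
  have hfactor := hquot.comp_hasFDerivAt x (hasFDerivAt_sqrt_dotProduct_self hx)
  have hcoeff (t : ℝ) : (φ' * √(x ⬝ᵥ x) - φ √(x ⬝ᵥ x)) / √(x ⬝ᵥ x) ^ 2 * ((√(x ⬝ᵥ x))⁻¹ * t) =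
      (φ' - φ √(x ⬝ᵥ x) / √(x ⬝ᵥ x)) * (t / (x ⬝ᵥ x)) := by
    rw [← Real.sq_sqrt (dotProduct_self_pos hx).le, Real.sqrt_sq (Real.sqrt_nonneg _)]
    field_simp
  refine (hfactor.smul (hasFDerivAt_id x)).congr_fderiv ?_
  ext1 y
  simp only [Function.comp_apply, id_eq, _root_.add_apply, _root_.smul_apply,
    ContinuousLinearMap.id_apply, ContinuousLinearMap.smulRight_apply, dotProductCLM_apply,
    mulVecCLM_apply, smul_dotProduct, smul_eq_mul, hcoeff, add_mulVec, smul_mulVec, sub_mulVec,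
    one_mulVec, lineProj_mulVec]
  module

end DotProduct

section Student

/-- The log-density at `Z`, up to an additive constant, of the Student-`t` distribution with `ν`
degrees of freedom, standardized to have mean `m` and standard deviation `w`. -/
noncomputable def studentLogDensity (ν Z m w : ℝ) : ℝ :=
  -Real.log w - (ν + 1) / 2 * Real.log (1 + ((Z - m) / w) ^ 2 / (ν - 2))

lemma hasDerivAt_log_one_add_sq_div {k : ℝ} (hk : 0 < k) (e : ℝ) :
    HasDerivAt (fun x => Real.log (1 + x ^ 2 / k)) (2 * e / (k + e ^ 2)) e := by
  have hpos : 0 < 1 + e ^ 2 / k := by positivity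
  have hinner := ((hasDerivAt_pow 2 e).div_const k).const_add 1
  refine (hinner.log hpos.ne').congr_deriv ?_
  field_simp
  norm_num [mul_comm]

variable {E : Type*} [NormedAddCommGroup E] [NormedSpace ℝ E]
  {m w : E → ℝ} {m' w' : E →L[ℝ] ℝ} {x : E}

lemma hasFDerivAt_standardized_residual (Z : ℝ) (hm : HasFDerivAt m m' x)
    (hw : HasFDerivAt w w' x) (hx : w x ≠ 0) :
    HasFDerivAt (fun y => (Z - m y) / w y)
      (-(w x)⁻¹ • (m' + ((Z - m x) / w x) • w')) x := by
  simp only [div_eq_mul_inv]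
  refine ((hm.const_sub Z).mul ((hasDerivAt_inv hx).comp_hasFDerivAt x hw)).congr_fderiv ?_
  ext y
  simp only [Function.comp_apply, _root_.add_apply, _root_.smul_apply, _root_.neg_apply,
    smul_eq_mul]
  field_simp
  ring

lemma hasFDerivAt_studentLogDensity {ν Z e W : ℝ} (hν : 2 < ν) (hm : HasFDerivAt m m' x)
    (hw : HasFDerivAt w w' x) (hx : w x ≠ 0) (he : e = (Z - m x) / w x)
    (hW : W = (ν + 1) / (ν - 2 + e ^ 2)) :
    HasFDerivAt (fun y => studentLogDensity ν Z (m y) (w y))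
      ((W * e / w x) • m' - ((1 - W * e ^ 2) / w x) • w') x := by
  have hresid := hasFDerivAt_standardized_residual Z hm hw hx
  have htail := ((hasDerivAt_log_one_add_sq_div (sub_pos.mpr hν) _).comp_hasFDerivAt x
    hresid).const_mul ((ν + 1) / 2)
  refine ((hw.log hx).neg.sub htail).congr_fderiv ?_
  ext y
  simp only [_root_.add_apply, _root_.sub_apply, _root_.smul_apply, _root_.neg_apply,
    smul_eq_mul, ← he, hW]
  field_simp
  ring

lemma hasFDerivAt_studentLogDensity_loading {n : Type*} [Fintype n] {ν Z ω e W : ℝ}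
    {U ρ : n → ℝ} (hν : 2 < ν) (hρ : ρ ⬝ᵥ ρ < 1) (hω : ω = √(1 - ρ ⬝ᵥ ρ))
    (he : e = (Z - ρ ⬝ᵥ U) / ω) (hW : W = (ν + 1) / (ν - 2 + e ^ 2)) :
    HasFDerivAt (fun y : n → ℝ => studentLogDensity ν Z (y ⬝ᵥ U) √(1 - y ⬝ᵥ y))
      (dotProductCLM ((W * e / ω) • U + ((1 - W * e ^ 2) / ω ^ 2) • ρ)) ρ := by
  subst hω
  refine (hasFDerivAt_studentLogDensity hν (hasFDerivAt_dotProduct_const U ρ)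
    (hasFDerivAt_sqrt_one_sub_dotProduct_self hρ)
    (Real.sqrt_pos.mpr (sub_pos.mpr hρ)).ne' he hW).congr_fderiv ?_
  ext1 y
  simp only [_root_.sub_apply, _root_.smul_apply, dotProductCLM_apply, add_dotProduct,
    smul_dotProduct, smul_eq_mul]
  ring

end Student

lemma hasDerivAt_tanh (x : ℝ) : HasDerivAt Real.tanh (1 - Real.tanh x ^ 2) x := by
  have hcosh : Real.cosh x ≠ 0 := (Real.cosh_pos x).ne'
  rw [funext Real.tanh_eq_sinh_div_cosh]
  refine ((Real.hasDerivAt_sinh x).div (Real.hasDerivAt_cosh x) hcosh).congr_deriv ?_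
  field_simp

lemma tanh_nonneg {x : ℝ} (hx : 0 ≤ x) : 0 ≤ Real.tanh x := by
  rw [Real.tanh_eq_sinh_div_cosh]
  exact div_nonneg (Real.sinh_nonneg_iff.mpr hx) (Real.cosh_pos x).le

section Loadings

variable {r : ℕ}

/-- The Jacobian matrix `J(τ)` of `rhoOfTau` at `τ ≠ 0`. -/
noncomputable def rhoJacobian (τ : Fin r → ℝ) : Matrix (Fin r) (Fin r) ℝ :=
  √((rhoOfTau τ ⬝ᵥ rhoOfTau τ) / (τ ⬝ᵥ τ)) • (1 - lineProj τ) +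
    (1 - rhoOfTau τ ⬝ᵥ rhoOfTau τ) • lineProj τ

lemma rhoJacobian_transpose (τ : Fin r → ℝ) : (rhoJacobian τ)ᵀ = rhoJacobian τ := by
  simp only [rhoJacobian, transpose_add, transpose_sub, transpose_smul, transpose_one,
    lineProj_transpose]

lemma rhoOfTau_eq_smul (τ : Fin r → ℝ) :
    rhoOfTau τ = (Real.tanh √(τ ⬝ᵥ τ) / √(τ ⬝ᵥ τ)) • τ := by
  by_cases hτ : τ = 0 <;> simp [rhoOfTau, hτ]

lemma rhoOfTau_dotProduct_self (τ : Fin r → ℝ) :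
    rhoOfTau τ ⬝ᵥ rhoOfTau τ = Real.tanh √(τ ⬝ᵥ τ) ^ 2 := by
  rcases eq_or_ne τ 0 with rfl | hτ
  · simp [rhoOfTau]
  have hpos := dotProduct_self_pos hτ
  rw [rhoOfTau_eq_smul, smul_dotProduct, dotProduct_smul, smul_smul, smul_eq_mul, ← sq, div_pow,
    Real.sq_sqrt hpos.le, div_mul_cancel₀ _ hpos.ne']

lemma rhoOfTau_dotProduct_self_lt_one (τ : Fin r → ℝ) : rhoOfTau τ ⬝ᵥ rhoOfTau τ < 1 :=
  (rhoOfTau_dotProduct_self τ).trans_lt (Real.tanh_sq_lt_one _)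

lemma sqrt_rhoOfTau_dotProduct_self_div (τ : Fin r → ℝ) :
    √((rhoOfTau τ ⬝ᵥ rhoOfTau τ) / (τ ⬝ᵥ τ)) = Real.tanh √(τ ⬝ᵥ τ) / √(τ ⬝ᵥ τ) := by
  rw [rhoOfTau_dotProduct_self, Real.sqrt_div (sq_nonneg _),
    Real.sqrt_sq (tanh_nonneg (Real.sqrt_nonneg _))]

lemma hasFDerivAt_rhoOfTau {τ : Fin r → ℝ} (hτ : τ ≠ 0) :
    HasFDerivAt rhoOfTau (mulVecCLM (rhoJacobian τ)) τ := by
  rw [rhoJacobian, sqrt_rhoOfTau_dotProduct_self_div, rhoOfTau_dotProduct_self,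
    funext rhoOfTau_eq_smul]
  exact hasFDerivAt_radial hτ (hasDerivAt_tanh _)

lemma quasiLogLik_eq_studentLogDensity (ν Z : ℝ) (U τ : Fin r → ℝ) :
    quasiLogLik ν Z U τ = studentLogDensity ν Z (rhoOfTau τ ⬝ᵥ U)
      √(1 - rhoOfTau τ ⬝ᵥ rhoOfTau τ) := rfl

end Loadings

/-- Score of the quasi log-likelihood with respect to the
transformed loadings `τ`: for `τ ≠ 0`,
`∇ℓ*(τ) = J(τ) [ (W e/ω) U + ((1 − W e²)/ω²) ρ ]`, with `W = (ν+1)/(ν−2+e²)`. -/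
theorem hasGradient_quasiLogLik (r : ℕ) (hr : 1 ≤ r) (ν : ℝ) (hν : 2 < ν)
    (Z : ℝ) (U : Fin r → ℝ)
    (τ : Fin r → ℝ) (hτ : τ ≠ 0)
    (ρ : Fin r → ℝ) (hρ : ρ = rhoOfTau τ)
    (ω : ℝ) (hω : ω = omegaOfTau τ)
    (e : ℝ) (he : e = residOfTau Z U τ)
    (W : ℝ) (hW : W = (ν + 1) / (ν - 2 + e ^ 2))
    (Pτ : Matrix (Fin r) (Fin r) ℝ) (hP : Pτ = (τ ⬝ᵥ τ)⁻¹ • Matrix.vecMulVec τ τ)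
    (J : Matrix (Fin r) (Fin r) ℝ)
    (hJ : J = Real.sqrt ((ρ ⬝ᵥ ρ) / (τ ⬝ᵥ τ)) • ((1 : Matrix (Fin r) (Fin r) ℝ) - Pτ)
        + (1 - ρ ⬝ᵥ ρ) • Pτ) :
    HasFDerivAt (quasiLogLik ν Z U (r := r))
      (∑ i, (J *ᵥ ((W * e / ω) • U + ((1 - W * e ^ 2) / ω ^ 2) • ρ)) i •
        (ContinuousLinearMap.proj i : (Fin r → ℝ) →L[ℝ] ℝ)) τ := by
  subst hρ
  have hJ' : J = rhoJacobian τ := by rw [hJ, hP, rhoJacobian, lineProj]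
  have he' : e = (Z - rhoOfTau τ ⬝ᵥ U) / ω := by rw [he, hω, residOfTau]
  have hloading := hasFDerivAt_studentLogDensity_loading hν
    (rhoOfTau_dotProduct_self_lt_one τ) hω he' hW
  have hchain := hloading.comp τ (hasFDerivAt_rhoOfTau hτ)
  rw [dotProductCLM_comp_mulVecCLM, rhoJacobian_transpose, ← hJ', dotProductCLM] at hchain
  rw [funext (quasiLogLik_eq_studentLogDensity ν Z U)]
  exact hchain
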